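/- Let N ≥ 1 and r ≥ N + 1, let V = ℤ^N, and let σ : ℤ[S_r] → End_ℤ(V^{⊗r}) be the place-permutation representation of the integral group algebra. Regard S_{N+1} ⊆ S_r as the subgroup fixing N+2, …, r, and let y = Σ_{w ∈ S_{N+1}} sgn(w)·w ∈ ℤ[S_r]. Then the kernel of σ is exactly the two-sided ideal of ℤ[S_r] generated by the single element y (the second fundamental theorem of invariant theory for the symmetric group acting on tensor space, over the integers). -/

import Mathlib

open scoped TensorProduct

/-!
The inclusion `⟨y⟩ ⊆ ker σ` is the pigeonhole principle: among the first `N + 1` places of a basis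
tensor two carry the same basis vector, and swapping them cancels the terms of `y` in pairs.

For the converse, call a permutation `w` *good* if its word `w 0, w 1, …` has no strictly
decreasing subsequence of length `N + 1`, and order permutations lexicographically by their words.

* Straightening (`straighten`): if `w` decreases on a set `I` of `N + 1` positions, then a translate
  of a conjugate of `y` is the signed sum of all `w * s` with `s` supported on `I`; each `w * s`
  with `s ≠ 1` is lexicographically smaller than `w`. Hence modulo `⟨y⟩` every element of `ℤ[S_r]`
  is a combination of good permutations.
* Independence (`eq_zero_of_good`): if `w` is good, colouring each position by the length of the
  longest decreasing subsequence ending there uses at most `N` colours, and `w` increases on every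
  colour class (`exists_coloring`). Let `e_c` be the basis tensor with indices `c`. The permutations
  sending `e_c` to the same tensor as `w` are the `w * s` with `s` preserving `c`, and `w` is
  lexicographically the smallest of them. So if `w` is the largest element of the support of a
  combination of good permutations `x`, the coefficient of `w` can be read off from `σ x e_c`.

Together: if `σ x = 0`, replace `x` modulo `⟨y⟩` by a good combination, which is then zero.
-/

namespace SFT

variable {N r : ℕ}

/-- The subgroup `S_{N+1}` of `S_r`, as a finite set: permutations fixing all places `≥ N + 1`. -/
def young (N r : ℕ) : Finset (Equiv.Perm (Fin r)) :=
  Finset.univ.filter (fun g : Equiv.Perm (Fin r) => ∀ i : Fin r, N + 1 ≤ (i : ℕ) → g i = i)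

/-- The antisymmetrizer of `S_{N+1}` in `ℤ[S_r]`. -/
noncomputable def antisymm (N r : ℕ) : MonoidAlgebra ℤ (Equiv.Perm (Fin r)) :=
  ∑ g ∈ young N r, ((Equiv.Perm.sign g : ℤˣ) : ℤ) • MonoidAlgebra.of ℤ (Equiv.Perm (Fin r)) g

/-- The word `w 0, w 1, …` of a permutation, in the lexicographically ordered set of words. -/
def word (w : Equiv.Perm (Fin r)) : Lex (Fin r → Fin r) := toLex w

/-- A permutation is good if its word has no decreasing subsequence of length `N + 1`. -/
def Good (N : ℕ) (w : Equiv.Perm (Fin r)) : Prop :=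
  ∀ t : Finset (Fin r), StrictAntiOn w t → t.card ≤ N

/-! ### The lexicographic order on permutations -/

lemma exists_first_moved {s : Equiv.Perm (Fin r)} (hs : s ≠ 1) :
    ∃ i, (∀ j < i, s j = j) ∧ i < s i := by
  have hne : (Finset.univ.filter (fun i => s i ≠ i)).Nonempty := by
    by_contra h
    apply hs
    ext i
    have := Finset.not_nonempty_iff_eq_empty.1 h
    rw [Finset.filter_eq_empty_iff] at this
    simpa using congrArg Fin.val (not_not.1 (this (Finset.mem_univ i)))
  obtain ⟨i, hi, hmin⟩ := Finset.exists_min_image _ id hne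
  simp only [Finset.mem_filter, Finset.mem_univ, true_and, id] at hi hmin
  have hfix : ∀ j < i, s j = j := fun j hj => by
    by_contra h
    exact absurd (hmin j h) (not_le.2 hj)
  refine ⟨i, hfix, lt_of_le_of_ne ?_ (Ne.symm hi)⟩
  by_contra! h
  exact hi (s.injective (hfix _ h))

/-- Right multiplication by `s ≠ 1` lowers the word if `w` decreases along every `i < s i`: at the
first position moved by `s`, the new letter comes from further right. -/
lemma word_mul_lt {w s : Equiv.Perm (Fin r)} (hs : s ≠ 1)
    (h : ∀ i, i < s i → w (s i) < w i) : word (w * s) < word w := by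
  obtain ⟨i, hi, hlt⟩ := exists_first_moved hs
  exact ⟨i, fun j hj => by simp [word, hi j hj], h i hlt⟩

lemma word_lt_mul {w s : Equiv.Perm (Fin r)} (hs : s ≠ 1)
    (h : ∀ i, i < s i → w i < w (s i)) : word w < word (w * s) := by
  obtain ⟨i, hi, hlt⟩ := exists_first_moved hs
  exact ⟨i, fun j hj => by simp [word, hi j hj], h i hlt⟩

/-! ### Good permutations span modulo the ideal -/

/-- A set of `N + 1` places is carried to the first `N + 1` places by some permutation. -/
lemma exists_perm (hr : N + 1 ≤ r) {I : Finset (Fin r)} (hI : I.card = N + 1) :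
    ∃ p : Equiv.Perm (Fin r), ∀ i, i ∉ I → N + 1 ≤ (p i : ℕ) := by
  classical
  have hcard : Fintype.card {i // i ∈ I} = Fintype.card {i : Fin r // (i : ℕ) < N + 1} := by
    rw [Fintype.card_coe, hI, Fintype.card_subtype]
    have := Fin.card_filter_val_lt (n := r) (m := N + 1)
    omega
  let e := Fintype.equivOfCardEq hcard
  exact ⟨e.extendSubtype, fun i hi => not_lt.1 (e.extendSubtype_not_mem i hi)⟩

/-- The elements congruent modulo the two-sided ideal `J` to a combination of good permutations. -/
def goodMod (N : ℕ) (J : TwoSidedIdeal (MonoidAlgebra ℤ (Equiv.Perm (Fin r)))) :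
    AddSubgroup (MonoidAlgebra ℤ (Equiv.Perm (Fin r))) where
  carrier := {x | ∃ x', (∀ g, x'.coeff g ≠ 0 → Good N g) ∧ x - x' ∈ J}
  zero_mem' := ⟨0, by simp, by simp⟩
  add_mem' := by
    rintro a b ⟨a', ha, ha'⟩ ⟨b', hb, hb'⟩
    refine ⟨a' + b', fun g hg => ?_, ?_⟩
    · by_cases h : a'.coeff g = 0
      · exact hb g (by simpa [h] using hg)
      · exact ha g h
    · rw [add_sub_add_comm]
      exact J.add_mem ha' hb'
  neg_mem' := by
    rintro a ⟨a', ha, ha'⟩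
    refine ⟨-a', fun g hg => ha g (by simpa using hg), ?_⟩
    rw [← neg_sub']
    exact J.neg_mem ha'

/-- Every permutation is a combination of good ones modulo an ideal containing the antisymmetrizer,
by induction on the lexicographic order. -/
lemma straighten (hr : N + 1 ≤ r) {J : TwoSidedIdeal (MonoidAlgebra ℤ (Equiv.Perm (Fin r)))}
    (hJ : antisymm N r ∈ J) (w : Equiv.Perm (Fin r)) :
    MonoidAlgebra.of ℤ _ w ∈ goodMod N J := by
  classical
  induction w using (InvImage.wf word (wellFounded_lt (α := Lex (Fin r → Fin r)))).induction with
  | _ w ih =>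
  by_cases hw : Good N w
  · refine ⟨MonoidAlgebra.of ℤ _ w, fun g hg => ?_, by simp⟩
    have : w = g := by
      by_contra h
      exact hg (by simp [h])
    exact this ▸ hw
  · simp only [Good, not_forall, not_le] at hw
    obtain ⟨t, ht, hcard⟩ := hw
    obtain ⟨I, hIt, hI⟩ := Finset.exists_subset_card_eq (Nat.succ_le_of_lt hcard)
    have hanti : StrictAntiOn w I := ht.mono (by exact_mod_cast hIt)
    obtain ⟨p, hp⟩ := exists_perm hr hI
    -- `w` times the antisymmetrizer of the symmetric group on `I`, the conjugate of `S_{N+1}` by `p⁻¹`.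
    have key : ∑ g ∈ young N r, ((Equiv.Perm.sign g : ℤˣ) : ℤ) •
        MonoidAlgebra.of ℤ (Equiv.Perm (Fin r)) (w * (p⁻¹ * g * p)) ∈ J := by
      have h := J.mul_mem_right _ (MonoidAlgebra.of ℤ _ p)
        (J.mul_mem_left (MonoidAlgebra.of ℤ _ (w * p⁻¹)) _ hJ)
      rw [antisymm, Finset.mul_sum, Finset.sum_mul] at h
      convert h using 2 with g
      rw [mul_smul_comm, smul_mul_assoc, ← map_mul, ← map_mul]
      simp only [mul_assoc]
    have h1 : (1 : Equiv.Perm (Fin r)) ∈ young N r := by simp [young]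
    rw [← Finset.add_sum_erase _ _ h1] at key
    have hrest : ∑ g ∈ (young N r).erase 1, ((Equiv.Perm.sign g : ℤˣ) : ℤ) •
        MonoidAlgebra.of ℤ (Equiv.Perm (Fin r)) (w * (p⁻¹ * g * p)) ∈ goodMod N J := by
      refine AddSubgroup.sum_mem _ fun g hg => AddSubgroup.zsmul_mem _ (ih _ ?_) _
      rw [Finset.mem_erase] at hg
      have hfix : ∀ i, i ∉ I → (p⁻¹ * g * p) i = i := fun i hi => by
        have := (Finset.mem_filter.1 hg.2).2 (p i) (hp i hi)
        simp [this]
      refine word_mul_lt (fun h => hg.1 ?_) fun i hi => ?_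
      · have := congrArg (fun u => p * u * p⁻¹) h
        simpa [mul_assoc] using this
      · have hiI : i ∈ I := by
          by_contra h
          exact hi.ne' (hfix i h)
        have hsI : (p⁻¹ * g * p) i ∈ I := by
          by_contra h
          exact hi.ne' ((p⁻¹ * g * p).injective (hfix _ h))
        exact hanti hiI hsI hi
    have hJM : ∀ z ∈ J, z ∈ goodMod N J := fun z hz => ⟨0, by simp, by simpa using hz⟩
    have := AddSubgroup.sub_mem _ (hJM _ key) hrest
    simpa using this

lemma mem_goodMod (hr : N + 1 ≤ r) {J : TwoSidedIdeal (MonoidAlgebra ℤ (Equiv.Perm (Fin r)))}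
    (hJ : antisymm N r ∈ J) (x : MonoidAlgebra ℤ (Equiv.Perm (Fin r))) : x ∈ goodMod N J := by
  exact MonoidAlgebra.induction_on x (straighten hr hJ)
    (fun _ _ hx hy => AddSubgroup.add_mem _ hx hy) (fun n _ hx => AddSubgroup.zsmul_mem _ hx n)

/-! ### Good permutations act independently -/

/-- The easy half of Dilworth's theorem for the word of `w`: the colour of `i` is one less than the
length of the longest decreasing subsequence ending at position `i`. -/
lemma exists_coloring {w : Equiv.Perm (Fin r)} (hw : Good N w) :
    ∃ c : Fin r → Fin N, ∀ i j, i < j → c i = c j → w i < w j := by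
  classical
  let T : Fin r → Finset (Finset (Fin r)) := fun i =>
    Finset.univ.filter fun t => StrictAntiOn w t ∧ i ∈ t ∧ ∀ j ∈ t, j ≤ i
  let d : Fin r → ℕ := fun i => (T i).sup Finset.card
  have hsingle : ∀ i, {i} ∈ T i := fun i => by simp [T]
  have hpos : ∀ i, 1 ≤ d i := fun i =>
    (Finset.card_singleton i).ge.trans (Finset.le_sup (f := Finset.card) (hsingle i))
  have hle : ∀ i, d i ≤ N := fun i =>
    Finset.sup_le fun t ht => hw t (Finset.mem_filter.1 ht).2.1
  have hstep : ∀ i j, i < j → w j < w i → d i < d j := fun i j hij hwij => by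
    obtain ⟨t, ht, htd⟩ := Finset.exists_mem_eq_sup (T i) ⟨_, hsingle i⟩ Finset.card
    obtain ⟨-, hanti, hit, hmax⟩ := Finset.mem_filter.1 ht
    have hjt : j ∉ t := fun h => absurd (hmax j h) (not_le.2 hij)
    have hmem : insert j t ∈ T j := by
      refine Finset.mem_filter.2 ⟨Finset.mem_univ _, ?_, Finset.mem_insert_self _ _, ?_⟩
      · have hj : ∀ b ∈ t, w j < w b := fun b hb =>
          hwij.trans_le (hanti.le_iff_ge hit hb |>.2 (hmax b hb))
        intro a ha b hb hab
        simp only [Finset.coe_insert, Set.mem_insert_iff, Finset.mem_coe] at ha hb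
        rcases ha with rfl | ha <;> rcases hb with rfl | hb
        · exact absurd hab (lt_irrefl _)
        · exact absurd (hab.trans_le (hmax b hb)) (not_lt.2 hij.le)
        · exact hj a ha
        · exact hanti ha hb hab
      · intro k hk
        rcases Finset.mem_insert.1 hk with rfl | hk
        · exact le_rfl
        · exact (hmax k hk).trans hij.le
    have := Finset.le_sup (f := Finset.card) hmem
    rw [Finset.card_insert_of_notMem hjt] at this
    change (T i).sup Finset.card < (T j).sup Finset.card
    omega
  refine ⟨fun i => ⟨d i - 1, by have := hpos i; have := hle i; omega⟩, fun i j hij hc => ?_⟩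
  rcases lt_trichotomy (w i) (w j) with h | h | h
  · exact h
  · exact absurd (w.injective h) hij.ne
  · have h1 := hstep i j hij h
    have h2 := hpos i
    simp only [Fin.mk.injEq] at hc
    omega

/-- The basis tensor `e_{c 0} ⊗ e_{c 1} ⊗ …`. -/
noncomputable def basisTensor (c : Fin r → Fin N) : ⨂[ℤ] (_ : Fin r), (Fin N → ℤ) :=
  PiTensorProduct.tprod ℤ fun i => Pi.single (c i) 1

/-- The coordinate of a tensor at the basis tensor with indices `d`. -/
noncomputable def coord (d : Fin r → Fin N) : (⨂[ℤ] (_ : Fin r), (Fin N → ℤ)) →ₗ[ℤ] ℤ :=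
  PiTensorProduct.lift ((MultilinearMap.mkPiAlgebra ℤ (Fin r) ℤ).compLinearMap
    fun i => LinearMap.proj (d i))

lemma coord_basisTensor (c d : Fin r → Fin N) :
    coord d (basisTensor c) = if c = d then 1 else 0 := by
  have : coord d (basisTensor c) = ∏ i, (Pi.single (c i) (1 : ℤ) : Fin N → ℤ) (d i) := by
    simp [coord, basisTensor]
  rw [this]
  split_ifs with h
  · simp [h]
  · obtain ⟨i, hi⟩ := Function.ne_iff.1 h
    exact Finset.prod_eq_zero (Finset.mem_univ i) (Pi.single_eq_of_ne (Ne.symm hi) _)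

/-- The algebra homomorphism `σ` is the place-permutation representation. -/
def IsPlacePerm (σ : MonoidAlgebra ℤ (Equiv.Perm (Fin r)) →ₐ[ℤ]
    Module.End ℤ (⨂[ℤ] (_ : Fin r), (Fin N → ℤ))) : Prop :=
  ∀ (g : Equiv.Perm (Fin r)) (f : Fin r → (Fin N → ℤ)),
    σ (MonoidAlgebra.of ℤ (Equiv.Perm (Fin r)) g) (PiTensorProduct.tprod ℤ f)
      = PiTensorProduct.tprod ℤ (fun i => f (g⁻¹ i))

variable {σ : MonoidAlgebra ℤ (Equiv.Perm (Fin r)) →ₐ[ℤ]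
    Module.End ℤ (⨂[ℤ] (_ : Fin r), (Fin N → ℤ))}

lemma sigma_of_basisTensor (hσ : IsPlacePerm σ) (g : Equiv.Perm (Fin r))
    (c : Fin r → Fin N) :
    σ (MonoidAlgebra.of ℤ (Equiv.Perm (Fin r)) g) (basisTensor c)
      = basisTensor (fun i => c (g⁻¹ i)) :=
  hσ g _

lemma coord_sigma (hσ : IsPlacePerm σ)
    (x : MonoidAlgebra ℤ (Equiv.Perm (Fin r))) (c d : Fin r → Fin N) :
    coord d (σ x (basisTensor c))
      = ∑ g, if (fun i => c (g⁻¹ i)) = d then x.coeff g else 0 := by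
  have hx : x = ∑ g, x.coeff g • MonoidAlgebra.of ℤ (Equiv.Perm (Fin r)) g := by
    classical
    ext h
    simp
  conv_lhs => rw [hx]
  simp only [map_sum, map_smul, LinearMap.sum_apply, LinearMap.smul_apply,
    sigma_of_basisTensor hσ, coord_basisTensor]
  simp

/-- A combination of good permutations killed by the place-permutation action is zero. -/
lemma eq_zero_of_good (hσ : IsPlacePerm σ)
    {x : MonoidAlgebra ℤ (Equiv.Perm (Fin r))}
    (hx : ∀ g, x.coeff g ≠ 0 → Good N g) (h0 : σ x = 0) : x = 0 := by
  classical
  by_contra hne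
  have hsupp : x.coeff.support.Nonempty := by
    rw [Finsupp.support_nonempty_iff]
    simpa using hne
  obtain ⟨w, hw, hmax⟩ := Finset.exists_max_image _ word hsupp
  rw [Finsupp.mem_support_iff] at hw
  obtain ⟨c, hc⟩ := exists_coloring (hx w hw)
  have h := coord_sigma hσ x c (fun i => c (w⁻¹ i))
  rw [h0, Finset.sum_eq_single w] at h
  · exact hw (by simpa using h.symm)
  · intro g _ hgw
    split_ifs with hcg
    · by_contra hg
      -- `g = w * s` with `s ≠ 1` preserving the colours, so `g` would exceed the maximal `w`.
      have hs : ∀ i, c ((w⁻¹ * g) i) = c i := fun i => by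
        have := congrFun hcg (g i)
        simpa using this.symm
      have hlt : word w < word (w * (w⁻¹ * g)) :=
        word_lt_mul (fun h1 => hgw (inv_mul_eq_one.1 h1).symm)
          fun i hi => hc i _ hi (hs i).symm
      rw [mul_inv_cancel_left] at hlt
      exact absurd (hmax g (Finsupp.mem_support_iff.2 hg)) (not_le.2 hlt)
    · rfl
  · simp

/-! ### The antisymmetrizer acts as zero -/

lemma sigma_antisymm (hσ : IsPlacePerm σ) (hr : N + 1 ≤ r) : σ (antisymm N r) = 0 := by
  classical
  have hbasis : ∀ c : Fin r → Fin N, σ (antisymm N r) (basisTensor c) = 0 := by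
    intro c
    obtain ⟨a, ha, b, hb, hab, hcab⟩ := Finset.exists_ne_map_eq_of_card_lt_of_maps_to
      (s := Finset.univ.filter fun i : Fin r => (i : ℕ) < N + 1) (t := (Finset.univ : Finset (Fin N)))
      (by
        have := Fin.card_filter_val_lt (n := r) (m := N + 1)
        rw [Finset.card_univ, Fintype.card_fin]
        omega)
      (f := c) (fun _ _ => by simp)
    simp only [Finset.mem_filter, Finset.mem_univ, true_and] at ha hb
    have hswap : ∀ i, c (Equiv.swap a b i) = c i := fun i => by
      rw [Equiv.swap_apply_def]
      split_ifs with h1 h2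
      · rw [h1, hcab]
      · rw [h2, hcab]
      · rfl
    simp only [antisymm, map_sum, map_smul, LinearMap.sum_apply, LinearMap.smul_apply,
      sigma_of_basisTensor hσ]
    -- `c` is unchanged by the swap of `a` and `b`, so `g` and `g * swap a b` give opposite terms.
    refine Finset.sum_involution (fun g _ => g * Equiv.swap a b) ?_ ?_ ?_ ?_
    · intro g _
      simp [Equiv.Perm.sign_swap hab, hswap]
    · intro g _ _ h
      exact hab (Equiv.swap_eq_one_iff.1 (mul_eq_left.1 h))
    · intro g hg
      simp only [young, Finset.mem_filter, Finset.mem_univ, true_and] at hg ⊢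
      intro i hi
      rw [Equiv.Perm.mul_apply, Equiv.swap_apply_of_ne_of_ne, hg i hi]
      · rintro rfl; omega
      · rintro rfl; omega
    · intro g _
      simp [mul_assoc]
  refine PiTensorProduct.ext (Module.Basis.ext_multilinear (fun _ => Pi.basisFun ℤ (Fin N)) ?_)
  intro c
  simpa [basisTensor] using hbasis c

end SFT

/-- Let `N ≥ 1`, `r ≥ N + 1`, `V = ℤ^N`, and let
`σ : ℤ[S_r] → End_ℤ(V^{⊗r})` be the place-permutation representation.  Regarding
`S_{N+1}` as the subgroup of `S_r` fixing the last `r - (N+1)` points, and letting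
`y = ∑_{w ∈ S_{N+1}} sgn(w) • w`, the kernel of `σ` is exactly the two-sided ideal
of `ℤ[S_r]` generated by the single element `y` (the second fundamental theorem of
invariant theory for the symmetric group on tensor space, over the integers). -/
theorem stmt_10 (N r : ℕ) (hN : 1 ≤ N) (hr : N + 1 ≤ r)
    (σ : MonoidAlgebra ℤ (Equiv.Perm (Fin r)) →ₐ[ℤ]
        Module.End ℤ (⨂[ℤ] (_ : Fin r), (Fin N → ℤ)))
    (hσ : ∀ (g : Equiv.Perm (Fin r)) (f : Fin r → (Fin N → ℤ)),
      σ (MonoidAlgebra.of ℤ (Equiv.Perm (Fin r)) g) (PiTensorProduct.tprod ℤ f)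
        = PiTensorProduct.tprod ℤ (fun i => f (g⁻¹ i))) :
    ∀ x : MonoidAlgebra ℤ (Equiv.Perm (Fin r)),
      σ x = 0 ↔
        x ∈ TwoSidedIdeal.span
          ({∑ g ∈ Finset.univ.filter
              (fun g : Equiv.Perm (Fin r) => ∀ i : Fin r, N + 1 ≤ (i : ℕ) → g i = i),
            ((Equiv.Perm.sign g : ℤˣ) : ℤ) • MonoidAlgebra.of ℤ (Equiv.Perm (Fin r)) g} :
            Set (MonoidAlgebra ℤ (Equiv.Perm (Fin r)))) := by
  intro x
  constructor
  · intro h0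
    have hJ := TwoSidedIdeal.subset_span (Set.mem_singleton (SFT.antisymm N r))
    obtain ⟨x', hx', hmem⟩ := SFT.mem_goodMod hr hJ x
    have hker : TwoSidedIdeal.span {SFT.antisymm N r} ≤ TwoSidedIdeal.ker σ :=
      TwoSidedIdeal.span_le.2 (Set.singleton_subset_iff.2
        ((TwoSidedIdeal.mem_ker σ).2 (SFT.sigma_antisymm hσ hr)))
    have h1 : σ (x - x') = 0 := (TwoSidedIdeal.mem_ker σ).1 (hker hmem)
    rw [map_sub, h0, zero_sub, neg_eq_zero] at h1
    rw [SFT.eq_zero_of_good hσ hx' h1, sub_zero] at hmem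
    exact hmem
  · intro hx
    have hker : TwoSidedIdeal.span {SFT.antisymm N r} ≤ TwoSidedIdeal.ker σ :=
      TwoSidedIdeal.span_le.2 (Set.singleton_subset_iff.2
        ((TwoSidedIdeal.mem_ker σ).2 (SFT.sigma_antisymm hσ hr)))
    exact (TwoSidedIdeal.mem_ker σ).1 (hker hx)
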